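/- arXiv:2308.10547 — 6 statements merged into one kernel-verified Lean document; each statement's English description precedes it below -/
import Mathlib

section
/- Let f : ℝ^{d×r} → ℝ be differentiable with L-Lipschitz Euclidean gradient (‖∇f(x) − ∇f(y)‖ ≤ L‖x − y‖ for all x, y ∈ ℝ^{d×r}), and let L_f be a constant with ‖∇f(x)‖ ≤ L_f for all x ∈ St(d,r). Then with L_g := L + 2L_f, for all x, y ∈ St(d,r) one has ‖grad f(x) − grad f(y)‖ ≤ L_g ‖x − y‖ (Lipschitz-type inequality for the Riemannian gradient on the Stiefel manifold). -/
open scoped RealInnerProductSpace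

attribute [local instance] Matrix.frobeniusNormedAddCommGroup Matrix.frobeniusNormedSpace

/-- The Stiefel manifold `St(d,r) = {x ∈ ℝ^{d×r} : xᵀx = I_r}`, viewed as a subset of the
`d × r` real matrices equipped with the Frobenius norm. -/
def Stiefel (d r : ℕ) : Set (Matrix (Fin d) (Fin r) ℝ) :=
  {x | x.transpose * x = 1}

/-- Orthogonal projection onto the tangent space of the Stiefel manifold at `x`:
`P_{T_x}(v) = v - (1/2)·x·(xᵀv + vᵀx)`. -/
noncomputable def Tproj {d r : ℕ} (x v : Matrix (Fin d) (Fin r) ℝ) :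
    Matrix (Fin d) (Fin r) ℝ :=
  v - (1 / 2 : ℝ) • (x * (x.transpose * v + v.transpose * x))

/-- `p` is a nearest-point projection of `z` onto the set `S` (w.r.t. the Frobenius norm). -/
def IsNearestPoint {d r : ℕ} (S : Set (Matrix (Fin d) (Fin r) ℝ))
    (z p : Matrix (Fin d) (Fin r) ℝ) : Prop :=
  p ∈ S ∧ ∀ q ∈ S, ‖z - p‖ ≤ ‖z - q‖

/-- The second largest singular value of a real symmetric matrix `W`: the singular values are
the absolute values of the eigenvalues, and the second largest element (with multiplicity) of
the family `i ↦ |λ_i|` is `sup_{i ≠ j} min |λ_i| |λ_j|`. -/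
noncomputable def sigma2 {n : ℕ} (W : Matrix (Fin n) (Fin n) ℝ) (hW : W.IsHermitian) : ℝ :=
  ⨆ p : {p : Fin n × Fin n // p.1 ≠ p.2}, min |hW.eigenvalues p.1.1| |hW.eigenvalues p.1.2|

theorem frob_sq {m n : ℕ} (A : Matrix (Fin m) (Fin n) ℝ) :
    ‖A‖ ^ 2 = Matrix.trace (A.transpose * A) := by
  rw [Matrix.frobenius_norm_def, ← Real.sqrt_eq_rpow, Real.sq_sqrt (by positivity)]
  simp only [Matrix.trace, Matrix.diag, Matrix.mul_apply, Matrix.transpose_apply]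
  rw [Finset.sum_comm]
  refine Finset.sum_congr rfl fun i _ => Finset.sum_congr rfl fun j _ => ?_
  rw [← Nat.cast_ofNat, Real.rpow_natCast, Real.norm_eq_abs, sq_abs, sq]

theorem frob_contract {m n : ℕ} (v p : Matrix (Fin m) (Fin n) ℝ)
    (h : Matrix.trace ((v - p).transpose * p) = 0) : ‖v - p‖ ≤ ‖v‖ := by
  have h2 : Matrix.trace (p.transpose * (v - p)) = 0 := by
    rw [← Matrix.trace_transpose, Matrix.transpose_mul, Matrix.transpose_transpose]; exact h
  have h1 : ‖v‖ ^ 2 = ‖v - p‖ ^ 2 + ‖p‖ ^ 2 := by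
    rw [frob_sq, frob_sq, frob_sq]
    have : v.transpose * v = (v - p).transpose * (v - p) + (v - p).transpose * p
        + p.transpose * (v - p) + p.transpose * p := by
      simp only [Matrix.transpose_sub, Matrix.sub_mul, Matrix.mul_sub]; abel
    rw [this]
    simp only [Matrix.trace_add, h, h2]; ring
  apply le_of_sq_le_sq _ (norm_nonneg _)
  nlinarith [sq_nonneg ‖p‖]

theorem stiefel_mul {d r n : ℕ} (x : Matrix (Fin d) (Fin r) ℝ) (hx : x.transpose * x = 1)
    (A : Matrix (Fin r) (Fin n) ℝ) : ‖x * A‖ = ‖A‖ := by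
  have : ‖x * A‖ ^ 2 = ‖A‖ ^ 2 := by
    rw [frob_sq, frob_sq, Matrix.transpose_mul, Matrix.mul_assoc, ← Matrix.mul_assoc x.transpose,
      hx, Matrix.one_mul]
  exact (sq_eq_sq₀ (norm_nonneg _) (norm_nonneg _)).1 this

theorem stiefel_tmul {d r n : ℕ} (x : Matrix (Fin d) (Fin r) ℝ) (hx : x.transpose * x = 1)
    (v : Matrix (Fin d) (Fin n) ℝ) : ‖x.transpose * v‖ ≤ ‖v‖ := by
  rw [← stiefel_mul x hx]
  have := frob_contract v (v - x * (x.transpose * v)) ?_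
  · simpa using this
  · rw [sub_sub_cancel, Matrix.mul_sub]
    simp only [Matrix.transpose_mul, Matrix.transpose_transpose, Matrix.mul_assoc]
    rw [← Matrix.mul_assoc x.transpose x, hx, Matrix.one_mul, sub_self, Matrix.trace_zero]

theorem Tproj_norm_le {d r : ℕ} (x : Matrix (Fin d) (Fin r) ℝ) (hx : x.transpose * x = 1)
    (v : Matrix (Fin d) (Fin r) ℝ) : ‖Tproj x v‖ ≤ ‖v‖ := by
  apply frob_contract
  set S := x.transpose * v + v.transpose * x with hS
  have hSt : S.transpose = S := by
    simp only [hS, Matrix.transpose_add, Matrix.transpose_mul, Matrix.transpose_transpose]; abel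
  have e1 : Matrix.trace (v.transpose * x * S) = Matrix.trace (x.transpose * v * S) := by
    rw [← Matrix.trace_transpose, Matrix.transpose_mul, hSt, Matrix.trace_mul_comm,
      Matrix.transpose_mul, Matrix.transpose_transpose]
  have e2 : Matrix.trace (S * S)
      = Matrix.trace (x.transpose * v * S) + Matrix.trace (v.transpose * x * S) := by
    rw [← Matrix.trace_add, ← Matrix.add_mul]
  have e3 : (v - (1 / 2 : ℝ) • (x * S)).transpose * ((1 / 2 : ℝ) • (x * S))
      = (1 / 2 : ℝ) • (v.transpose * x * S) - (1 / 4 : ℝ) • (S * S) := by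
    rw [Matrix.transpose_sub, Matrix.transpose_smul, Matrix.transpose_mul, hSt, Matrix.sub_mul,
      Matrix.smul_mul, Matrix.mul_smul, Matrix.mul_smul, Matrix.mul_assoc S,
      ← Matrix.mul_assoc x.transpose x, hx, Matrix.one_mul, smul_smul, Matrix.mul_assoc]
    norm_num
  rw [e3, Matrix.trace_sub, Matrix.trace_smul, Matrix.trace_smul, e2, ← e1]
  simp only [smul_eq_mul]; ring

theorem frob_transpose {m n : ℕ} (A : Matrix (Fin m) (Fin n) ℝ) : ‖A.transpose‖ = ‖A‖ :=
  Matrix.frobenius_norm_transpose A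

theorem Tproj_diff_le {d r : ℕ} (x y : Matrix (Fin d) (Fin r) ℝ) (hx : x.transpose * x = 1)
    (hy : y.transpose * y = 1) (v : Matrix (Fin d) (Fin r) ℝ) :
    ‖Tproj x v - Tproj y v‖ ≤ 2 * ‖v‖ * ‖x - y‖ := by
  have e : Tproj x v - Tproj y v = -((1 / 2 : ℝ) •
      (((x - y) * (x.transpose * v) + y * ((x - y).transpose * v)) +
        ((x - y) * (v.transpose * x) + y * (v.transpose * (x - y))))) := by
    rw [Tproj, Tproj, sub_sub_sub_cancel_left, ← smul_sub, ← smul_neg]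
    congr 1
    simp only [Matrix.transpose_sub, Matrix.sub_mul, Matrix.mul_sub, Matrix.mul_add]; abel
  have hv : ‖v.transpose * x‖ ≤ ‖v‖ := by
    rw [← frob_transpose, Matrix.transpose_mul, Matrix.transpose_transpose]
    exact stiefel_tmul x hx v
  have b1 : ‖(x - y) * (x.transpose * v)‖ ≤ ‖x - y‖ * ‖v‖ :=
    (Matrix.frobenius_norm_mul _ _).trans
      (mul_le_mul_of_nonneg_left (stiefel_tmul x hx v) (norm_nonneg _))
  have b2 : ‖y * ((x - y).transpose * v)‖ ≤ ‖x - y‖ * ‖v‖ := by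
    rw [stiefel_mul y hy, ← frob_transpose (x - y)]
    exact Matrix.frobenius_norm_mul _ _
  have b3 : ‖(x - y) * (v.transpose * x)‖ ≤ ‖x - y‖ * ‖v‖ :=
    (Matrix.frobenius_norm_mul _ _).trans (mul_le_mul_of_nonneg_left hv (norm_nonneg _))
  have b4 : ‖y * (v.transpose * (x - y))‖ ≤ ‖v‖ * ‖x - y‖ := by
    rw [stiefel_mul y hy, ← frob_transpose v]
    exact Matrix.frobenius_norm_mul _ _
  rw [e, norm_neg, norm_smul, Real.norm_of_nonneg (by norm_num)]
  have := norm_add_le_of_le (norm_add_le_of_le b1 b2) (norm_add_le_of_le b3 b4)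
  linarith

/-- Lipschitz-type inequality for the Riemannian gradient on the Stiefel
manifold. If `f` is differentiable with Euclidean (Frobenius) gradient `∇f` that is
`L`-Lipschitz, and `‖∇f(x)‖ ≤ L_f` on `St(d,r)`, then with `L_g = L + 2L_f` the Riemannian
gradient `grad f(x) = P_{T_x}(∇f(x))` satisfies
`‖grad f(x) - grad f(y)‖ ≤ L_g ‖x - y‖` for all `x, y ∈ St(d,r)`. -/
theorem stmt0 {d r : ℕ} (L Lf : ℝ)
    (f : Matrix (Fin d) (Fin r) ℝ → ℝ)
    (nablaf : Matrix (Fin d) (Fin r) ℝ → Matrix (Fin d) (Fin r) ℝ)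
    (hdiff : Differentiable ℝ f)
    (hgrad : ∀ x v, fderiv ℝ f x v = Matrix.trace ((nablaf x).transpose * v))
    (hLip : ∀ x y, ‖nablaf x - nablaf y‖ ≤ L * ‖x - y‖)
    (hbd : ∀ x ∈ Stiefel d r, ‖nablaf x‖ ≤ Lf) :
    ∀ x ∈ Stiefel d r, ∀ y ∈ Stiefel d r,
      ‖Tproj x (nablaf x) - Tproj y (nablaf y)‖ ≤ (L + 2 * Lf) * ‖x - y‖ := by
  intro x hx y hy
  have e : Tproj x (nablaf x) - Tproj y (nablaf y)
      = Tproj x (nablaf x - nablaf y) + (Tproj x (nablaf y) - Tproj y (nablaf y)) := by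
    have : Tproj x (nablaf x - nablaf y) = Tproj x (nablaf x) - Tproj x (nablaf y) := by
      simp only [Tproj, Matrix.transpose_sub, Matrix.sub_mul, Matrix.mul_sub, Matrix.mul_add,
        smul_add, smul_sub]
      abel
    rw [this]; abel
  rw [e]
  have h1 := (Tproj_norm_le x hx (nablaf x - nablaf y)).trans (hLip x y)
  have h2 := Tproj_diff_le x y hx hy (nablaf y)
  have h3 := mul_le_mul_of_nonneg_right (hbd y hy) (norm_nonneg (x - y))
  have h4 := norm_add_le_of_le h1 h2
  linarith
end

section
/- Let γ ∈ (0,1), C > 0, and let W be symmetric, doubly stochastic with nonnegative entries and second largest singular value σ₂ ∈ [0,1). Let x_{1,k},…,x_{n,k} ∈ St(d,r) with ‖x̂_k − x̄_k‖ ≤ γ/2, let η_{i,k} ∈ T_{x_{i,k}} St(d,r) (i.e. x_{i,k}ᵀη_{i,k} + η_{i,k}ᵀx_{i,k} = 0) with ‖η_{i,k}‖ ≤ C for each i, let 0 < α_k ≤ γ(1−γ)/(4C), and let t be a positive integer with √n·σ₂^t·ζ ≤ γ(1−γ)/4. Define z_{i} := ∑_{j=1}^n (W^t)_{ij} x_{j,k}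 + α_k η_{i,k} and let x_{i,k+1} be any nearest-point projection of z_i onto St(d,r). Then (i) dist(z_i, St(d,r)) ≤ γ for every i = 1,…,n, and (ii) ‖x̂_{k+1} − x̄_{k+1}‖ ≤ γ/2, where x̂_{k+1} = (1/n)∑_i x_{i,k+1} and x̄_{k+1} is any nearest-point projection of x̂_{k+1} onto St(d,r). -/
open scoped RealInnerProductSpace

attribute [local instance] Matrix.frobeniusNormedAddCommGroup Matrix.frobeniusNormedSpace

open Matrix in
lemma fro_sq {d r : ℕ} (A : Matrix (Fin d) (Fin r) ℝ) : ‖A‖ ^ 2 = (Aᵀ * A).trace := by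
  have h : ‖A‖ = Real.sqrt (∑ i, ∑ j, A i j ^ 2) := by
    rw [Matrix.frobenius_norm_def, Real.sqrt_eq_rpow]
    simp
  rw [h, Real.sq_sqrt (by positivity), Finset.sum_comm]
  simp [Matrix.trace, Matrix.mul_apply, pow_two]

open Matrix in
lemma fro_cs {d r : ℕ} (A B : Matrix (Fin d) (Fin r) ℝ) : |(Aᵀ * B).trace| ≤ ‖A‖ * ‖B‖ := by
  refine abs_le_of_sq_le_sq ?_ (by positivity)
  rw [mul_pow, fro_sq, fro_sq]
  have := Finset.sum_mul_sq_le_sq_mul_sq (Finset.univ : Finset (Fin r × Fin d))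
    (fun p => A p.2 p.1) (fun p => B p.2 p.1)
  simp only [Fintype.sum_prod_type] at this
  simpa [Matrix.trace, Matrix.mul_apply, pow_two] using this

open Matrix in
lemma fro_iso {d r : ℕ} (p : Matrix (Fin d) (Fin r) ℝ) (hp : p ∈ Stiefel d r)
    (N : Matrix (Fin r) (Fin r) ℝ) : ‖p * N‖ = ‖N‖ := by
  have hp' : pᵀ * p = 1 := hp
  have : ‖p * N‖ ^ 2 = ‖N‖ ^ 2 := by
    rw [fro_sq, fro_sq, Matrix.transpose_mul, Matrix.mul_assoc, ← Matrix.mul_assoc pᵀ, hp',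
      Matrix.one_mul]
  exact (pow_left_inj₀ (norm_nonneg _) (norm_nonneg _) two_ne_zero).1 this

open Matrix in
lemma near_trace {d r : ℕ} {z p : Matrix (Fin d) (Fin r) ℝ}
    (h : IsNearestPoint (Stiefel d r) z p) (q : Matrix (Fin d) (Fin r) ℝ) (hq : q ∈ Stiefel d r) :
    (zᵀ * q).trace ≤ (zᵀ * p).trace := by
  have h1 := pow_le_pow_left₀ (norm_nonneg _) (h.2 q hq) 2
  have hp : pᵀ * p = 1 := h.1
  have hq : qᵀ * q = 1 := hq
  have e1 : (pᵀ * z).trace = (zᵀ * p).trace := by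
    rw [← Matrix.trace_transpose]; simp
  have e2 : (qᵀ * z).trace = (zᵀ * q).trace := by
    rw [← Matrix.trace_transpose]; simp
  rw [fro_sq, fro_sq] at h1
  simp only [Matrix.transpose_sub, Matrix.sub_mul, Matrix.mul_sub, Matrix.trace_sub, hp, hq,
    e1, e2] at h1
  linarith

open Matrix in
lemma near_symm {d r : ℕ} {z p : Matrix (Fin d) (Fin r) ℝ}
    (h : IsNearestPoint (Stiefel d r) z p) : (p * zᵀ) = z * pᵀ := by
  have hp : pᵀ * p = 1 := h.1
  suffices H : ∀ i j, i ≠ j → (p * zᵀ) i j = (p * zᵀ) j i by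
    ext i j
    have : (z * pᵀ) i j = (p * zᵀ) j i := by
      have e := congrFun (congrFun (Matrix.transpose_mul p zᵀ) i) j
      rw [Matrix.transpose_apply, Matrix.transpose_transpose] at e
      exact e.symm
    rw [this]
    by_cases hij : i = j
    · rw [hij]
    · exact H i j hij
  intro i j hij
  set K : Matrix (Fin d) (Fin d) ℝ := Matrix.single i j 1 - Matrix.single j i 1 with hK
  have hKT : Kᵀ = -K := by simp [hK]
  have hK2 : K * K = - Matrix.single i i 1 - Matrix.single j j 1 := by
    simp [hK, Matrix.sub_mul, Matrix.mul_sub, hij, hij.symm]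
    try abel
  have hK3 : K * K * K = -K := by
    rw [hK2]
    simp [hK, Matrix.sub_mul, Matrix.mul_sub, hij, hij.symm]
    try abel
  have hK4 : K * K * (K * K) = -(K * K) := by
    rw [← Matrix.mul_assoc, hK3]; simp
  have key : ∀ s c : ℝ, s ^ 2 + c ^ 2 = 1 →
      s * (K * (p * zᵀ)).trace + (1 - c) * (K * K * (p * zᵀ)).trace ≤ 0 := by
    intro s c hsc
    have hQ : (1 + s • K + (1 - c) • (K * K))ᵀ * (1 + s • K + (1 - c) • (K * K)) = 1 := by
      simp only [Matrix.transpose_add, Matrix.transpose_smul, Matrix.transpose_mul, hKT,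
        Matrix.transpose_one, Matrix.add_mul, Matrix.mul_add, Matrix.smul_mul, Matrix.mul_smul,
        Matrix.one_mul, Matrix.mul_one, Matrix.neg_mul, Matrix.mul_neg, neg_neg, hK4,
        ← Matrix.mul_assoc K K K, hK3]
      have : s ^ 2 = 1 - c ^ 2 := by linarith
      match_scalars <;> first | ring1 | linear_combination this | linear_combination -this
    have := near_trace h ((1 + s • K + (1 - c) • (K * K)) * p) (by
      change _ * _ = _
      rw [Matrix.transpose_mul, Matrix.mul_assoc, ← Matrix.mul_assoc _ _ p, hQ, Matrix.one_mul, hp])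
    rw [Matrix.trace_mul_comm] at this
    simp only [Matrix.mul_assoc, Matrix.add_mul, Matrix.smul_mul, Matrix.trace_add,
      Matrix.trace_smul, Matrix.one_mul, smul_eq_mul] at this
    rw [Matrix.trace_mul_comm p] at this
    simp only [Matrix.mul_assoc]
    linarith
  have hb : (K * (p * zᵀ)).trace = (p * zᵀ) j i - (p * zᵀ) i j := by
    simp [hK, Matrix.sub_mul, Matrix.trace_single_mul]
  set b := (K * (p * zᵀ)).trace
  set a := (K * K * (p * zᵀ)).trace
  have h2 : ∀ u : ℝ, u * b + u ^ 2 * a ≤ 0 := by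
    intro u
    have hu : (0:ℝ) < 1 + u ^ 2 := by positivity
    have := key (2 * u / (1 + u ^ 2)) ((1 - u ^ 2) / (1 + u ^ 2)) (by field_simp; ring)
    have e : 2 * u / (1 + u ^ 2) * b + (1 - (1 - u ^ 2) / (1 + u ^ 2)) * a
        = 2 / (1 + u ^ 2) * (u * b + u ^ 2 * a) := by field_simp; ring
    rw [e] at this
    by_contra hcon
    push Not at hcon
    have : 0 < 2 / (1 + u ^ 2) * (u * b + u ^ 2 * a) := by positivity
    linarith
  have hb0 : b = 0 := by
    have := h2 (b / (1 + |a|))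
    have hA : (0:ℝ) < 1 + |a| := by positivity
    have e : b / (1 + |a|) * b + (b / (1 + |a|)) ^ 2 * a
      = b ^ 2 * (1 + |a| + a) / (1 + |a|) ^ 2 := by field_simp
    rw [e] at this
    by_contra hne
    have h3 : 0 < 1 + |a| + a := by linarith [neg_abs_le a]
    have : 0 < b ^ 2 * (1 + |a| + a) / (1 + |a|) ^ 2 := by positivity
    linarith
  linarith

open Matrix in
lemma prox {d r : ℕ} {z p q : Matrix (Fin d) (Fin r) ℝ}
    (h : IsNearestPoint (Stiefel d r) z p) (hq : q ∈ Stiefel d r) :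
    ((z - p)ᵀ * (q - p)).trace ≤ ‖z - p‖ / 2 * ‖q - p‖ ^ 2 := by
  have hp : pᵀ * p = 1 := h.1
  have hq : qᵀ * q = 1 := hq
  have hs := near_symm h
  set N : Matrix (Fin r) (Fin r) ℝ := zᵀ * p - 1 with hN
  have hz : z - p = p * N := by
    rw [hN, Matrix.mul_sub, ← Matrix.mul_assoc, hs, Matrix.mul_assoc, hp]; simp
  have hNT : Nᵀ = N := by
    have : pᵀ * (p * zᵀ) * p = pᵀ * (z * pᵀ) * p := by rw [hs]
    rw [← Matrix.mul_assoc, hp, Matrix.one_mul, Matrix.mul_assoc, Matrix.mul_assoc, hp,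
      Matrix.mul_one] at this
    simp [hN, this]
  have hn : ‖z - p‖ = ‖N‖ := by rw [hz, fro_iso p h.1]
  have e1 : (N * (qᵀ * p)).trace = (N * (pᵀ * q)).trace := by
    rw [← Matrix.trace_transpose, Matrix.transpose_mul, hNT, Matrix.trace_mul_comm]; simp
  have e2 : ((z - p)ᵀ * (q - p)).trace = - (1/2) * (((q - p) * N)ᵀ * (q - p)).trace := by
    rw [hz]
    simp only [Matrix.transpose_mul, hNT, Matrix.transpose_sub, Matrix.mul_assoc, Matrix.sub_mul,
      Matrix.mul_sub, hp, hq, Matrix.trace_sub, e1]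
    ring
  rw [e2, hn]
  have h1 := fro_cs ((q - p) * N) (q - p)
  have h2 := Matrix.frobenius_norm_mul (q - p) N
  have h3 := mul_le_mul_of_nonneg_right h2 (norm_nonneg (q - p))
  have h4 := neg_abs_le ((((q - p) * N)ᵀ * (q - p)).trace)
  nlinarith

open Matrix in
lemma proj_lip {d r : ℕ} {z p w q : Matrix (Fin d) (Fin r) ℝ} {γ : ℝ} (hγ : γ < 1)
    (h : IsNearestPoint (Stiefel d r) z p) (h' : IsNearestPoint (Stiefel d r) w q)
    (hz : ‖z - p‖ ≤ γ) (hw : ‖w - q‖ ≤ γ) : (1 - γ) * ‖q - p‖ ≤ ‖w - z‖ := by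
  have h1 := prox h h'.1
  have h2 := prox h' h.1
  have h3 := (le_abs_self _).trans (fro_cs (w - z) (q - p))
  have e : ((w - z)ᵀ * (q - p)).trace = ‖q - p‖ ^ 2 - ((z - p)ᵀ * (q - p)).trace
      - ((w - q)ᵀ * (p - q)).trace := by
    rw [fro_sq]
    simp only [Matrix.transpose_sub, Matrix.sub_mul, Matrix.mul_sub, Matrix.trace_sub]
    ring
  rw [norm_sub_rev p q] at h2
  have h4 : (1 - γ) * ‖q - p‖ ^ 2 ≤ ‖w - z‖ * ‖q - p‖ := by
    nlinarith [sq_nonneg ‖q - p‖]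
  rcases (norm_nonneg (q - p)).eq_or_lt with h0 | h0
  · rw [← h0]; simp
  · nlinarith

lemma stiefel_bdd (d r : ℕ) : Bornology.IsBounded (Stiefel d r) := by
  refine (Metric.isBounded_closedBall (x := (0 : Matrix (Fin d) (Fin r) ℝ))
    (r := Real.sqrt r)).subset ?_
  intro x hx
  have hx : x.transpose * x = 1 := hx
  rw [mem_closedBall_zero_iff]
  apply Real.le_sqrt_of_sq_le
  rw [fro_sq, hx]; simp

lemma pow_row {n : ℕ} (W : Matrix (Fin n) (Fin n) ℝ) (hrow : ∀ i, ∑ j, W i j = 1) (t : ℕ) (i) :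
    ∑ j, (W ^ t) i j = 1 := by
  induction t generalizing i with
  | zero => simp [Matrix.one_apply]
  | succ t ih =>
    simp only [pow_succ, Matrix.mul_apply]
    rw [Finset.sum_comm]
    simp [← Finset.mul_sum, hrow, ih]

open Matrix in
lemma spec_row {n : ℕ} (W : Matrix (Fin n) (Fin n) ℝ) (hW : W.IsHermitian)
    (hrow : ∀ i, ∑ j, W i j = 1) (hcol : ∀ j, ∑ i, W i j = 1)
    (hσ : sigma2 W hW ∈ Set.Ico (0 : ℝ) 1) (t : ℕ) (i : Fin n) :
    ∑ j, ((W ^ t) i j - (n : ℝ)⁻¹) ^ 2 ≤ (sigma2 W hW ^ t) ^ 2 := by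
  have hn : (0:ℝ) < n := by exact_mod_cast i.pos
  set u : Fin n → Fin n → ℝ := fun k => (hW.eigenvectorBasis k).ofLp with hu
  set l := hW.eigenvalues with hl
  have hpars : ∀ v : Fin n → ℝ, ∑ j, v j ^ 2 = ∑ k, (∑ j, u k j * v j) ^ 2 := by
    intro v
    have := hW.eigenvectorBasis.sum_sq_norm_inner_right (WithLp.toLp 2 v)
    rw [EuclideanSpace.norm_sq_eq] at this
    simp only [PiLp.inner_apply, Real.norm_eq_abs, sq_abs] at this
    rw [← this]
    simp [hu, mul_comm]
  have hexp : ∀ v : Fin n → ℝ, ∀ m, v m = ∑ k, (∑ j, u k j * v j) * u k m := by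
    intro v m
    have := congrArg (fun y => y.ofLp m) (hW.eigenvectorBasis.sum_repr' (WithLp.toLp 2 v))
    simp only [PiLp.inner_apply] at this
    rw [← this]
    simp [hu, mul_comm]
  have heig : ∀ k, W *ᵥ u k = l k • u k := fun k => hW.mulVec_eigenvectorBasis k
  have heigt : ∀ k, (W ^ t) *ᵥ u k = l k ^ t • u k := by
    intro k
    clear_value u l
    induction t with
    | zero => simp
    | succ t ih =>
      rw [pow_succ, ← Matrix.mulVec_mulVec, heig, Matrix.mulVec_smul, ih, smul_smul]
      congr 1; ring
  set S : Fin n → ℝ := fun k => ∑ j, u k j with hS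
  have hSl : ∀ k, l k * S k = S k := by
    intro k
    have : ∑ m, (W *ᵥ u k) m = S k := by
      simp only [Matrix.mulVec, dotProduct]
      rw [Finset.sum_comm]
      simp [← Finset.sum_mul, hcol, hS]
    rw [heig] at this
    refine Eq.trans ?_ this
    simp [hS, Finset.mul_sum]
  have hone : ∀ m, 1 = ∑ k, S k * u k m := by
    intro m
    simpa using hexp (fun _ => 1) m
  obtain ⟨k0, hk0⟩ : ∃ k, S k ≠ 0 := by
    by_contra hcon
    push Not at hcon
    have := hone i
    simp [hcon] at this
  have hl0 : l k0 = 1 := by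
    have := hSl k0
    field_simp at this
    exact this
  have hsm : ∀ k, k ≠ k0 → |l k| ≤ sigma2 W hW := by
    intro k hk
    have h1 : min |l k| |l k0| ≤ sigma2 W hW :=
      le_ciSup (f := fun p : {p : Fin n × Fin n // p.1 ≠ p.2} =>
        min |hW.eigenvalues p.1.1| |hW.eigenvalues p.1.2|) (Set.finite_range _).bddAbove
        ⟨(k, k0), hk⟩
    rw [hl0, abs_one] at h1
    rcases min_le_iff.1 h1 with h | h
    · exact h
    · linarith [hσ.2]
  have hS0 : ∀ k, k ≠ k0 → S k = 0 := by
    intro k hk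
    by_contra hne
    have := hSl k
    have h1 : l k = 1 := by
      field_simp at this
      exact this
    have := hsm k hk
    rw [h1, abs_one] at this
    linarith [hσ.2]
  have hone' : ∀ m, S k0 * u k0 m = 1 := by
    intro m
    rw [hone m, Finset.sum_eq_single k0]
    · intro k _ hk; rw [hS0 k hk]; simp
    · simp
  have hSS : S k0 * S k0 = n := by
    have : ∑ m, S k0 * u k0 m = n := by simp [hone']
    rwa [← Finset.mul_sum] at this
  have hcoef : ∀ k, ∑ j, u k j * ((W ^ t) i j - (n : ℝ)⁻¹) = l k ^ t * u k i - (n:ℝ)⁻¹ * S k := by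
    intro k
    have := congrFun (heigt k) i
    simp only [Matrix.mulVec, dotProduct, Pi.smul_apply, smul_eq_mul] at this
    rw [← this]
    simp only [mul_sub, Finset.sum_sub_distrib, hS, Finset.mul_sum]
    congr 1 <;> exact Finset.sum_congr rfl fun _ _ => mul_comm _ _
  have hei : ∑ k, (u k i) ^ 2 = 1 := by
    have := hpars (Pi.single i 1)
    simp [Pi.single_apply] at this
    exact this.symm
  rw [hpars]
  calc ∑ k, (∑ j, u k j * ((W ^ t) i j - (n : ℝ)⁻¹)) ^ 2
      ≤ ∑ k, (sigma2 W hW ^ t) ^ 2 * (u k i) ^ 2 := by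
        apply Finset.sum_le_sum
        intro k _
        rw [hcoef]
        by_cases hk : k = k0
        · have : l k ^ t * u k i - (n:ℝ)⁻¹ * S k = 0 := by
            rw [hk, hl0, one_pow, one_mul]
            apply mul_left_cancel₀ hk0
            rw [mul_sub, hone', mul_left_comm, hSS, inv_mul_cancel₀ hn.ne']
            simp
          rw [this, zero_pow two_ne_zero]
          exact mul_nonneg (sq_nonneg _) (sq_nonneg _)
        · rw [hS0 k hk, mul_zero, sub_zero, mul_pow]
          apply mul_le_mul_of_nonneg_right _ (sq_nonneg _)
          rw [← sq_abs, abs_pow]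
          exact pow_le_pow_left₀ (by positivity) (pow_le_pow_left₀ (abs_nonneg _) (hsm k hk) t) 2
    _ = (sigma2 W hW ^ t) ^ 2 := by rw [← Finset.mul_sum, hei, mul_one]

/-- one step of the decentralized update stays in the tube and keeps the
consensus error small. -/
theorem stmt3 {d r n : ℕ} (γ C : ℝ) (hγ : γ ∈ Set.Ioo (0 : ℝ) 1) (hC : 0 < C)
    (W : Matrix (Fin n) (Fin n) ℝ) (hW : W.IsHermitian)
    (hnn : ∀ i j, 0 ≤ W i j)
    (hrow : ∀ i, ∑ j, W i j = 1) (hcol : ∀ j, ∑ i, W i j = 1)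
    (hσ : sigma2 W hW ∈ Set.Ico (0 : ℝ) 1)
    (x : Fin n → Matrix (Fin d) (Fin r) ℝ) (hx : ∀ i, x i ∈ Stiefel d r)
    (xbar : Matrix (Fin d) (Fin r) ℝ)
    (hxbar : IsNearestPoint (Stiefel d r) ((n : ℝ)⁻¹ • ∑ i, x i) xbar)
    (hcons : ‖(n : ℝ)⁻¹ • ∑ i, x i - xbar‖ ≤ γ / 2)
    (η : Fin n → Matrix (Fin d) (Fin r) ℝ)
    (hηtan : ∀ i, (x i).transpose * η i + (η i).transpose * x i = 0)
    (hηC : ∀ i, ‖η i‖ ≤ C)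
    (α : ℝ) (hα0 : 0 < α) (hα : α ≤ γ * (1 - γ) / (4 * C))
    (t : ℕ) (ht : 0 < t)
    (hmix : Real.sqrt n * sigma2 W hW ^ t * Metric.diam (Stiefel d r) ≤ γ * (1 - γ) / 4)
    (x' : Fin n → Matrix (Fin d) (Fin r) ℝ)
    (hx' : ∀ i, IsNearestPoint (Stiefel d r)
      (∑ j, (W ^ t) i j • x j + α • η i) (x' i)) :
    (∀ i, Metric.infDist (∑ j, (W ^ t) i j • x j + α • η i) (Stiefel d r) ≤ γ) ∧
      ∀ xbar', IsNearestPoint (Stiefel d r) ((n : ℝ)⁻¹ • ∑ i, x' i) xbar' →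
        ‖(n : ℝ)⁻¹ • ∑ i, x' i - xbar'‖ ≤ γ / 2 := by
  obtain ⟨hγ0, hγ1⟩ := hγ
  have hz : ∀ i, ‖(∑ j, (W ^ t) i j • x j + α • η i) - (n : ℝ)⁻¹ • ∑ i, x i‖
      ≤ γ * (1 - γ) / 2 := by
    intro i
    have hn : (0:ℝ) < n := by exact_mod_cast i.pos
    have e0 : ∑ j, ((W ^ t) i j - (n : ℝ)⁻¹) = 0 := by
      rw [Finset.sum_sub_distrib, pow_row W hrow]
      simp [hn.ne']
    have e : (∑ j, (W ^ t) i j • x j + α • η i) - (n : ℝ)⁻¹ • ∑ i, x i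
        = ∑ j, ((W ^ t) i j - (n : ℝ)⁻¹) • (x j - x i) + α • η i := by
      have e1 : ∑ j, ((W ^ t) i j - (n : ℝ)⁻¹) • (x j - x i)
          = ∑ j, ((W ^ t) i j - (n : ℝ)⁻¹) • x j := by
        simp only [smul_sub, Finset.sum_sub_distrib]
        rw [← Finset.sum_smul, e0, zero_smul, sub_zero]
      rw [e1, Finset.smul_sum]
      simp only [sub_smul, Finset.sum_sub_distrib]
      abel
    have h1 : ‖α • η i‖ ≤ γ * (1 - γ) / 4 := by
      rw [norm_smul, Real.norm_of_nonneg hα0.le]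
      rw [le_div_iff₀ (by positivity)] at hα
      have := mul_le_mul_of_nonneg_left (hηC i) hα0.le
      linarith
    have h2 : ‖∑ j, ((W ^ t) i j - (n : ℝ)⁻¹) • (x j - x i)‖ ≤ γ * (1 - γ) / 4 := by
      refine le_trans ?_ hmix
      refine (norm_sum_le _ _).trans ?_
      have h3 : ∑ j, ‖((W ^ t) i j - (n : ℝ)⁻¹) • (x j - x i)‖
          ≤ ∑ j, |(W ^ t) i j - (n : ℝ)⁻¹| * Metric.diam (Stiefel d r) := by
        apply Finset.sum_le_sum
        intro j _
        rw [norm_smul, Real.norm_eq_abs, ← dist_eq_norm]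
        exact mul_le_mul_of_nonneg_left
          (Metric.dist_le_diam_of_mem (stiefel_bdd d r) (hx j) (hx i)) (abs_nonneg _)
      refine h3.trans ?_
      rw [← Finset.sum_mul]
      apply mul_le_mul_of_nonneg_right _ Metric.diam_nonneg
      have hs := spec_row W hW hrow hcol hσ t i
      have h4 := sq_sum_le_card_mul_sum_sq (s := (Finset.univ : Finset (Fin n)))
        (f := fun j => |(W ^ t) i j - (n : ℝ)⁻¹|)
      simp only [sq_abs, Finset.card_univ, Fintype.card_fin] at h4
      refine le_of_abs_le (abs_le_of_sq_le_sq ?_ (mul_nonneg (Real.sqrt_nonneg _) (pow_nonneg hσ.1 t)))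
      rw [mul_pow, Real.sq_sqrt hn.le]
      exact h4.trans (mul_le_mul_of_nonneg_left hs hn.le)
    rw [e]
    refine (norm_add_le _ _).trans ?_
    linarith
  have hd : ∀ i, ‖(∑ j, (W ^ t) i j • x j + α • η i) - xbar‖ ≤ γ := by
    intro i
    have := norm_sub_le_norm_sub_add_norm_sub (∑ j, (W ^ t) i j • x j + α • η i)
      ((n : ℝ)⁻¹ • ∑ i, x i) xbar
    nlinarith [hz i]
  refine ⟨fun i => ?_, ?_⟩
  · refine (Metric.infDist_le_dist_of_mem hxbar.1).trans ?_
    rw [dist_eq_norm]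
    exact hd i
  · intro xbar' hxbar'
    refine (hxbar'.2 xbar hxbar.1).trans ?_
    rcases Nat.eq_zero_or_pos n with rfl | hn
    · simpa using hcons
    have hn' : (0:ℝ) < n := by exact_mod_cast hn
    have hi : ∀ i, ‖x' i - xbar‖ ≤ γ / 2 := by
      intro i
      have := proj_lip hγ1 hxbar (hx' i) (by linarith) (((hx' i).2 xbar hxbar.1).trans (hd i))
      have h5 := this.trans (hz i)
      have h6 : 0 < 1 - γ := by linarith
      nlinarith
    have e : (n : ℝ)⁻¹ • ∑ i, x' i - xbar = (n : ℝ)⁻¹ • ∑ i, (x' i - xbar) := by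
      rw [Finset.sum_sub_distrib, smul_sub]
      simp only [Finset.sum_const, Finset.card_univ, Fintype.card_fin]
      rw [← Nat.cast_smul_eq_nsmul ℝ, smul_smul, inv_mul_cancel₀ hn'.ne', one_smul]
    rw [e, norm_smul, norm_inv, Real.norm_natCast, inv_mul_le_iff₀ hn']
    refine (norm_sum_le _ _).trans ?_
    refine (Finset.sum_le_sum fun i _ => hi i).trans ?_
    simp
end

section
/- (Descent property of the decentralized Fletcher–Reeves directions.) Let 0 < c₂ < 1/2 and suppose g_k ≠ 0 for all k ≥ 0, η_0 = −g_0, η_{k+1} = −g_{k+1} + β_{k+1} v_k with β_{k+1} = ‖g_{k+1}‖²/‖g_k‖², and for every k ≥ 0 the inequality |⟨g_{k+1}, v_k⟩| ≤ c₂ |⟨g_k, η_k⟩| holds. Then for all k ≥ 0, each η_k is a descent direction and −1/(1−c₂) ≤ ⟨g_k, η_k⟩/‖g_k‖² ≤ −(1−2c₂)/(1−c₂). -/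
open scoped RealInnerProductSpace

/-- Descent property of the decentralized Fletcher–Reeves directions. -/
theorem stmt5 {H : Type*} [NormedAddCommGroup H] [InnerProductSpace ℝ H]
    (c₂ : ℝ) (hc₂0 : 0 < c₂) (hc₂ : c₂ < 1 / 2)
    (g η v : ℕ → H)
    (hg : ∀ k, g k ≠ 0)
    (hη0 : η 0 = -g 0)
    (hrec : ∀ k, η (k + 1) = -g (k + 1) + (‖g (k + 1)‖ ^ 2 / ‖g k‖ ^ 2) • v k)
    (hwolfe : ∀ k, |(⟪g (k + 1), v k⟫)| ≤ c₂ * |(⟪g k, η k⟫)|) :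
    ∀ k, ⟪g k, η k⟫ < 0 ∧
      -(1 / (1 - c₂)) ≤ ⟪g k, η k⟫ / ‖g k‖ ^ 2 ∧
      ⟪g k, η k⟫ / ‖g k‖ ^ 2 ≤ -((1 - 2 * c₂) / (1 - c₂)) := by
  have hpos : ∀ k, 0 < ‖g k‖ ^ 2 := fun k => pow_pos (norm_pos_iff.mpr (hg k)) 2
  have hc : 0 < 1 - c₂ := by linarith
  have e1 : 1 / (1 - c₂) = 1 + c₂ / (1 - c₂) := by field_simp; ring
  have e2 : (1 - 2 * c₂) / (1 - c₂) = 1 - c₂ / (1 - c₂) := by field_simp; ring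
  have e3 : c₂ * (1 + c₂ / (1 - c₂)) = c₂ / (1 - c₂) := by field_simp; ring
  have hlt : c₂ / (1 - c₂) < 1 := by rw [div_lt_one hc]; linarith
  have key : ∀ k, |⟪g k, η k⟫ / ‖g k‖ ^ 2 + 1| ≤ c₂ / (1 - c₂) := by
    intro k
    induction k with
    | zero =>
      rw [hη0, inner_neg_right, real_inner_self_eq_norm_sq, neg_div, div_self (hpos 0).ne']
      simp only [neg_add_cancel, abs_zero]
      positivity
    | succ k ih =>
      have h1 : ⟪g (k + 1), η (k + 1)⟫ / ‖g (k + 1)‖ ^ 2 + 1 = ⟪g (k + 1), v k⟫ / ‖g k‖ ^ 2 := by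
        rw [hrec, inner_add_right, inner_neg_right, real_inner_self_eq_norm_sq, inner_smul_right]
        have := norm_ne_zero_iff.mpr (hg k)
        have := norm_ne_zero_iff.mpr (hg (k + 1))
        field_simp
        ring
      have h2 : |⟪g k, η k⟫ / ‖g k‖ ^ 2| ≤ 1 + c₂ / (1 - c₂) := by
        rw [abs_le] at ih ⊢
        constructor <;> linarith [ih.1, ih.2]
      rw [h1, abs_div, abs_of_pos (hpos k)]
      rw [abs_div, abs_of_pos (hpos k)] at h2
      calc _ ≤ c₂ * |⟪g k, η k⟫| / ‖g k‖ ^ 2 := div_le_div_of_nonneg_right (hwolfe k) (hpos k).le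
        _ = c₂ * (|⟪g k, η k⟫| / ‖g k‖ ^ 2) := mul_div_assoc _ _ _
        _ ≤ c₂ * (1 + c₂ / (1 - c₂)) := mul_le_mul_of_nonneg_left h2 hc₂0.le
        _ = _ := e3
  intro k
  have h := abs_le.mp (key k)
  rw [e1, e2]
  refine ⟨?_, by linarith [h.1], by linarith [h.2]⟩
  have hn : ⟪g k, η k⟫ / ‖g k‖ ^ 2 < 0 := by linarith [h.2]
  by_contra hcon
  exact absurd (div_nonneg (not_lt.mp hcon) (hpos k).le) (not_le.mpr hn)
end

section
/- Let 0 < c₂ < 1/2 and suppose g_k ≠ 0 for all k ≥ 0, η_0 = −g_0, η_{k+1} = −g_{k+1} + β_{k+1} v_k with β_{k+1} = ‖g_{k+1}‖²/‖g_k‖², and for every k ≥ 0 both |⟨g_{k+1}, v_k⟩| ≤ c₂ |⟨g_k, η_k⟩| and ‖v_k‖ ≤ ‖η_k‖ hold. Then with c := (1+c₂)/(1−c₂), for every k ≥ 0: ‖η_{k+1}‖² ≤ c‖g_{k+1}‖² + β_{k+1}²‖η_k‖². -/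
open scoped RealInnerProductSpace

/-- recurrence inequality for the norms of the Fletcher–Reeves directions. -/
theorem stmt6 {H : Type*} [NormedAddCommGroup H] [InnerProductSpace ℝ H]
    (c₂ : ℝ) (hc₂0 : 0 < c₂) (hc₂ : c₂ < 1 / 2)
    (g η v : ℕ → H)
    (hg : ∀ k, g k ≠ 0)
    (hη0 : η 0 = -g 0)
    (hrec : ∀ k, η (k + 1) = -g (k + 1) + (‖g (k + 1)‖ ^ 2 / ‖g k‖ ^ 2) • v k)
    (hwolfe : ∀ k, |(⟪g (k + 1), v k⟫)| ≤ c₂ * |(⟪g k, η k⟫)|)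
    (hv : ∀ k, ‖v k‖ ≤ ‖η k‖) :
    ∀ k, ‖η (k + 1)‖ ^ 2 ≤ (1 + c₂) / (1 - c₂) * ‖g (k + 1)‖ ^ 2 +
      (‖g (k + 1)‖ ^ 2 / ‖g k‖ ^ 2) ^ 2 * ‖η k‖ ^ 2 := by
  have h1 : 0 < 1 - c₂ := by linarith
  have hG : ∀ k, 0 < ‖g k‖ ^ 2 := fun k => by
    have := norm_pos_iff.mpr (hg k)
    positivity
  -- one-step bound on the cross term
  have step : ∀ k, |(⟪g k, η k⟫)| ≤ 1 / (1 - c₂) * ‖g k‖ ^ 2 →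
      |(‖g (k + 1)‖ ^ 2 / ‖g k‖ ^ 2) * ⟪g (k + 1), v k⟫| ≤
        c₂ / (1 - c₂) * ‖g (k + 1)‖ ^ 2 := by
    intro k hk
    have hb : 0 < ‖g (k + 1)‖ ^ 2 / ‖g k‖ ^ 2 := div_pos (hG _) (hG _)
    rw [abs_mul, abs_of_pos hb]
    calc (‖g (k + 1)‖ ^ 2 / ‖g k‖ ^ 2) * |(⟪g (k + 1), v k⟫)|
        ≤ (‖g (k + 1)‖ ^ 2 / ‖g k‖ ^ 2) * (c₂ * (1 / (1 - c₂) * ‖g k‖ ^ 2)) :=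
          mul_le_mul_of_nonneg_left
            ((hwolfe k).trans (mul_le_mul_of_nonneg_left hk hc₂0.le)) hb.le
      _ = c₂ / (1 - c₂) * ‖g (k + 1)‖ ^ 2 := by
          have := (hG k).ne'
          have := h1.ne'
          have := norm_ne_zero_iff.mpr (hg k)
          field_simp
  have e1 : 1 / (1 - c₂) = 1 + c₂ / (1 - c₂) := by
    have := h1.ne'
    field_simp
    ring
  have e2 : (1 + c₂) / (1 - c₂) = 1 + 2 * (c₂ / (1 - c₂)) := by
    have := h1.ne'
    field_simp
    ring
  have hpos : 0 < c₂ / (1 - c₂) := div_pos hc₂0 h1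
  have key : ∀ k, |(⟪g k, η k⟫)| ≤ 1 / (1 - c₂) * ‖g k‖ ^ 2 := by
    intro k
    induction k with
    | zero =>
      rw [hη0, inner_neg_right, abs_neg, real_inner_self_eq_norm_sq, abs_of_pos (hG 0), e1]
      nlinarith [mul_pos hpos (hG 0)]
    | succ k ih =>
      have h := abs_le.mp (step k ih)
      have hp := hG (k + 1)
      rw [hrec k, inner_add_right, inner_neg_right, real_inner_self_eq_norm_sq,
        real_inner_smul_right, e1, abs_le]
      constructor <;> linarith [h.1, h.2]
  intro k
  have h := abs_le.mp (step k (key k))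
  have hvk : ‖v k‖ ^ 2 ≤ ‖η k‖ ^ 2 := pow_le_pow_left₀ (norm_nonneg _) (hv k) 2
  have hm := mul_le_mul_of_nonneg_left hvk (sq_nonneg (‖g (k + 1)‖ ^ 2 / ‖g k‖ ^ 2))
  rw [hrec k, norm_add_sq_real, norm_neg, inner_neg_left, real_inner_smul_right, norm_smul,
    mul_pow, Real.norm_eq_abs, sq_abs, e2]
  linarith [h.1, h.2]
end

section
/- Let 0 < c₂ < 1/2 and suppose g_k ≠ 0 for all k ≥ 0, η_0 = −g_0, η_{k+1} = −g_{k+1} + β_{k+1} v_k with β_{k+1} = ‖g_{k+1}‖²/‖g_k‖², and for every k ≥ 0 both |⟨g_{k+1}, v_k⟩| ≤ c₂ |⟨g_k, η_k⟩| and ‖v_k‖ ≤ ‖η_k‖ hold. Then with c := (1+c₂)/(1−c₂), for every k ≥ 0: ‖η_k‖² < c · ‖g_k‖⁴ · ∑_{j=0}^{k} ‖g_j‖^{−2}. -/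
open scoped RealInnerProductSpace

/-- cumulative bound on the norms of the Fletcher–Reeves directions. -/
theorem stmt7 {H : Type*} [NormedAddCommGroup H] [InnerProductSpace ℝ H]
    (c₂ : ℝ) (hc₂0 : 0 < c₂) (hc₂ : c₂ < 1 / 2)
    (g η v : ℕ → H)
    (hg : ∀ k, g k ≠ 0)
    (hη0 : η 0 = -g 0)
    (hrec : ∀ k, η (k + 1) = -g (k + 1) + (‖g (k + 1)‖ ^ 2 / ‖g k‖ ^ 2) • v k)
    (hwolfe : ∀ k, |(⟪g (k + 1), v k⟫)| ≤ c₂ * |(⟪g k, η k⟫)|)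
    (hv : ∀ k, ‖v k‖ ≤ ‖η k‖) :
    ∀ k, ‖η k‖ ^ 2 < (1 + c₂) / (1 - c₂) * ‖g k‖ ^ 4 *
      ∑ j ∈ Finset.range (k + 1), (‖g j‖ ^ 2)⁻¹ := by
  have hc : 0 < 1 - c₂ := by linarith
  have hG : ∀ k, 0 < ‖g k‖ ^ 2 := fun k => by
    have := norm_pos_iff.mpr (hg k)
    positivity
  have h1 : ∀ k, |(⟪g k, η k⟫)| ≤ ‖g k‖ ^ 2 / (1 - c₂) := by
    intro k
    induction k with
    | zero =>
      rw [hη0, inner_neg_right, real_inner_self_eq_norm_sq, abs_neg, abs_of_pos (hG 0),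
        le_div_iff₀ hc]
      nlinarith [hG 0]
    | succ k ih =>
      have hb : 0 < ‖g (k + 1)‖ ^ 2 / ‖g k‖ ^ 2 := div_pos (hG _) (hG _)
      rw [hrec, inner_add_right, inner_neg_right, real_inner_self_eq_norm_sq,
        real_inner_smul_right]
      refine (abs_add_le _ _).trans ?_
      rw [abs_neg, abs_of_pos (hG (k + 1)), abs_mul, abs_of_pos hb]
      have h2 : |(⟪g (k + 1), v k⟫)| ≤ c₂ * (‖g k‖ ^ 2 / (1 - c₂)) :=
        (hwolfe k).trans (mul_le_mul_of_nonneg_left ih hc₂0.le)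
      have h3 := mul_le_mul_of_nonneg_left h2 hb.le
      have h4 : ‖g (k + 1)‖ ^ 2 / ‖g k‖ ^ 2 * (c₂ * (‖g k‖ ^ 2 / (1 - c₂)))
          = ‖g (k + 1)‖ ^ 2 / (1 - c₂) - ‖g (k + 1)‖ ^ 2 := by
        have := (hG k).ne'
        have := hc.ne'
        have := norm_ne_zero_iff.mpr (hg k)
        field_simp
        ring
      linarith
  intro k
  induction k with
  | zero =>
    have h0 := norm_ne_zero_iff.mpr (hg 0)
    have e : (1 + c₂) / (1 - c₂) * ‖g 0‖ ^ 4 * ∑ j ∈ Finset.range (0 + 1), (‖g j‖ ^ 2)⁻¹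
        = (1 + c₂) * ‖g 0‖ ^ 2 / (1 - c₂) := by
      simp only [zero_add, Finset.sum_range_one]
      field_simp
    rw [e, hη0, norm_neg, lt_div_iff₀ hc]
    nlinarith [hG 0, mul_pos hc₂0 (hG 0)]
  | succ k ih =>
    have hb : 0 < ‖g (k + 1)‖ ^ 2 / ‖g k‖ ^ 2 := div_pos (hG _) (hG _)
    have h0 := norm_ne_zero_iff.mpr (hg k)
    have h0' := norm_ne_zero_iff.mpr (hg (k + 1))
    have hcn := hc.ne'
    rw [Finset.sum_range_succ]
    generalize (∑ j ∈ Finset.range (k + 1), (‖g j‖ ^ 2)⁻¹) = S at ih ⊢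
    have e : ‖η (k + 1)‖ ^ 2 = ‖g (k + 1)‖ ^ 2
        - 2 * (‖g (k + 1)‖ ^ 2 / ‖g k‖ ^ 2 * ⟪g (k + 1), v k⟫)
        + (‖g (k + 1)‖ ^ 2 / ‖g k‖ ^ 2) ^ 2 * ‖v k‖ ^ 2 := by
      rw [hrec, norm_add_sq_real, norm_neg, inner_neg_left, real_inner_smul_right, norm_smul,
        Real.norm_of_nonneg hb.le]
      ring
    have h2 : |(⟪g (k + 1), v k⟫)| ≤ c₂ * (‖g k‖ ^ 2 / (1 - c₂)) :=
      (hwolfe k).trans (mul_le_mul_of_nonneg_left (h1 k) hc₂0.le)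
    have h3 := mul_le_mul_of_nonneg_left ((neg_le_abs _).trans h2) hb.le
    have h4 : ‖v k‖ ^ 2 < (1 + c₂) / (1 - c₂) * ‖g k‖ ^ 4 * S :=
      (pow_le_pow_left₀ (norm_nonneg _) (hv k) 2).trans_lt ih
    have h5 := mul_lt_mul_of_pos_left h4 (pow_pos hb 2)
    have h6 : (1 + c₂) / (1 - c₂) * ‖g (k + 1)‖ ^ 4 * (S + (‖g (k + 1)‖ ^ 2)⁻¹)
        = ‖g (k + 1)‖ ^ 2
          + 2 * (‖g (k + 1)‖ ^ 2 / ‖g k‖ ^ 2 * (c₂ * (‖g k‖ ^ 2 / (1 - c₂))))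
          + (‖g (k + 1)‖ ^ 2 / ‖g k‖ ^ 2) ^ 2 * ((1 + c₂) / (1 - c₂) * ‖g k‖ ^ 4 * S) := by
      field_simp
      ring
    rw [e, h6]
    linarith
end

section
/- (Global convergence, combination step.) Let f_1,…,f_n : ℝ^{d×r} → ℝ be differentiable, each with L-Lipschitz Euclidean gradient and ‖∇f_i(x)‖ ≤ L_f on St(d,r); set L_g := L + 2L_f and f := (1/n)∑_i f_i. Let x_{i,k} ∈ St(d,r) for all i, k, and for each k let x̄_k ∈ St(d,r). Suppose there are constants C > 0, γ ∈ (0,1) and a sequence α_k → 0 such that (1/n)∑_{i=1}^n ‖x̄_k − x_{i,k}‖² ≤ C·L_g²·α_k²/(1−γ)² for all k, and that lim inf_{k→∞} ‖(1/n)∑_{i=1}^n grad f_i(x_{i,k})‖ = 0. Then lim inf_{k→∞} ‖grad f(x̄_k)‖² = 0. -/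
open scoped RealInnerProductSpace

attribute [local instance] Matrix.frobeniusNormedAddCommGroup Matrix.frobeniusNormedSpace

theorem continuous_Tproj_comp {d r : ℕ}
    (g : Matrix (Fin d) (Fin r) ℝ → Matrix (Fin d) (Fin r) ℝ) (hg : Continuous g) :
    Continuous (fun y => Tproj y (g y)) := by
  unfold Tproj
  fun_prop

theorem isCompact_Stiefel (d r : ℕ) : IsCompact (Stiefel d r) := by
  have : ProperSpace (Matrix (Fin d) (Fin r) ℝ) := FiniteDimensional.proper ℝ _
  apply Metric.isCompact_of_isClosed_isBounded
  · have hc : Continuous (fun x : Matrix (Fin d) (Fin r) ℝ => x.transpose * x) := by fun_prop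
    exact isClosed_singleton.preimage hc
  · rw [isBounded_iff_forall_norm_le]
    refine ⟨Real.sqrt r, fun x hx => ?_⟩
    apply Real.le_sqrt_of_sq_le
    have h1 : ‖x‖ ^ 2 = ∑ i, ∑ j, x i j ^ 2 := by
      rw [Matrix.frobenius_norm_def, ← Real.sqrt_eq_rpow, Real.sq_sqrt (by positivity)]
      simp
    have h2 : Matrix.trace (x.transpose * x) = ∑ i, ∑ j, x i j ^ 2 := by
      rw [Finset.sum_comm]
      simp [Matrix.trace, Matrix.mul_apply, sq]
    have h3 : x.transpose * x = 1 := hx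
    rw [h1, ← h2, h3]
    simp

theorem Tproj_avg {d r n : ℕ} (c : ℝ) (x : Matrix (Fin d) (Fin r) ℝ)
    (v : Fin n → Matrix (Fin d) (Fin r) ℝ) :
    Tproj x (c • ∑ i, v i) = c • ∑ i, Tproj x (v i) := by
  simp only [Tproj, Finset.sum_sub_distrib, smul_sub, ← Finset.smul_sum, ← Matrix.mul_sum,
    Finset.sum_add_distrib, ← Matrix.sum_mul, Matrix.transpose_smul, Matrix.transpose_sum,
    Matrix.mul_smul, Matrix.smul_mul, ← smul_add]
  rw [smul_comm]

/-- Global convergence, combination step. Here `f = (1/n)∑ᵢ fᵢ`, so that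
`grad f(x̄ₖ) = P_{T_{x̄ₖ}}((1/n)∑ᵢ ∇fᵢ(x̄ₖ))`. -/
theorem stmt14 {d r n : ℕ} (L Lf C γ : ℝ) (hC : 0 < C) (hγ : γ ∈ Set.Ioo (0 : ℝ) 1)
    (f : Fin n → Matrix (Fin d) (Fin r) ℝ → ℝ)
    (nabla : Fin n → Matrix (Fin d) (Fin r) ℝ → Matrix (Fin d) (Fin r) ℝ)
    (hdiff : ∀ i, Differentiable ℝ (f i))
    (hgrad : ∀ i x v, fderiv ℝ (f i) x v = Matrix.trace ((nabla i x).transpose * v))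
    (hLip : ∀ i x y, ‖nabla i x - nabla i y‖ ≤ L * ‖x - y‖)
    (hbd : ∀ i, ∀ x ∈ Stiefel d r, ‖nabla i x‖ ≤ Lf)
    (x : ℕ → Fin n → Matrix (Fin d) (Fin r) ℝ) (hx : ∀ k i, x k i ∈ Stiefel d r)
    (xbar : ℕ → Matrix (Fin d) (Fin r) ℝ) (hxbar : ∀ k, xbar k ∈ Stiefel d r)
    (α : ℕ → ℝ) (hα : Filter.Tendsto α Filter.atTop (nhds 0))
    (hcons : ∀ k, (n : ℝ)⁻¹ * ∑ i, ‖xbar k - x k i‖ ^ 2 ≤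
      C * (L + 2 * Lf) ^ 2 * α k ^ 2 / (1 - γ) ^ 2)
    (hliminf : Filter.liminf
      (fun k => ‖(n : ℝ)⁻¹ • ∑ i, Tproj (x k i) (nabla i (x k i))‖) Filter.atTop = 0) :
    Filter.liminf
      (fun k => ‖Tproj (xbar k) ((n : ℝ)⁻¹ • ∑ i, nabla i (xbar k))‖ ^ 2) Filter.atTop = 0 := by
  have hγ' : 0 < 1 - γ := by linarith [hγ.2]
  have hnc : ∀ i, Continuous (nabla i) := fun i => by
    have : LipschitzWith L.toNNReal (nabla i) := LipschitzWith.of_dist_le_mul fun a b => by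
      rw [dist_eq_norm, dist_eq_norm]
      exact (hLip i a b).trans
        (mul_le_mul_of_nonneg_right (Real.le_coe_toNNReal L) (norm_nonneg _))
    exact this.continuous
  set G : Fin n → Matrix (Fin d) (Fin r) ℝ → Matrix (Fin d) (Fin r) ℝ :=
    fun i y => Tproj y (nabla i y) with hG
  have hGc : ∀ i, Continuous (G i) := fun i => continuous_Tproj_comp _ (hnc i)
  have hK := isCompact_Stiefel d r
  -- consensus
  have hxi : ∀ i, Filter.Tendsto (fun k => ‖xbar k - x k i‖) Filter.atTop (nhds 0) := by
    intro i
    have hn : (0 : ℝ) < n := by exact_mod_cast i.pos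
    have hb : Filter.Tendsto (fun k => (n : ℝ) * (C * (L + 2 * Lf) ^ 2 * α k ^ 2 / (1 - γ) ^ 2))
        Filter.atTop (nhds 0) := by
      have := (((hα.pow 2).const_mul (C * (L + 2 * Lf) ^ 2)).div_const ((1 - γ) ^ 2)).const_mul
        (n : ℝ)
      simpa using this
    have hsq : Filter.Tendsto (fun k => ‖xbar k - x k i‖ ^ 2) Filter.atTop (nhds 0) := by
      refine squeeze_zero (fun k => by positivity) (fun k => ?_) hb
      have h1 : ‖xbar k - x k i‖ ^ 2 ≤ ∑ j, ‖xbar k - x k j‖ ^ 2 :=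
        Finset.single_le_sum (f := fun j => ‖xbar k - x k j‖ ^ 2)
          (fun j _ => by positivity) (Finset.mem_univ i)
      have h2 := mul_le_mul_of_nonneg_left (hcons k) hn.le
      rw [← mul_assoc, mul_inv_cancel₀ hn.ne', one_mul] at h2
      exact h1.trans h2
    have := hsq.sqrt
    simpa using this
  -- difference of the gradients
  have hGi : ∀ i, Filter.Tendsto (fun k => G i (xbar k) - G i (x k i)) Filter.atTop (nhds 0) := by
    intro i
    have huc := Metric.uniformContinuousOn_iff.1
      (hK.uniformContinuousOn_of_continuous (hGc i).continuousOn)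
    refine Metric.tendsto_atTop.2 ?_
    intro ε hε
    obtain ⟨δ, hδ, h⟩ := huc ε hε
    obtain ⟨N, hN⟩ := (Metric.tendsto_atTop.1 (hxi i)) δ hδ
    refine ⟨N, fun k hk => ?_⟩
    have h1 := hN k hk
    rw [dist_zero_right, norm_norm, ← dist_eq_norm] at h1
    have h2 := h _ (hxbar k) _ (hx k i) h1
    rwa [dist_zero_right, ← dist_eq_norm]
  set a : ℕ → ℝ := fun k => ‖(n : ℝ)⁻¹ • ∑ i, Tproj (x k i) (nabla i (x k i))‖ with ha
  set b : ℕ → ℝ := fun k => ‖Tproj (xbar k) ((n : ℝ)⁻¹ • ∑ i, nabla i (xbar k))‖ with hb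
  have hdiff0 : Filter.Tendsto
      (fun k => ‖(n : ℝ)⁻¹ • ∑ i, (G i (xbar k) - G i (x k i))‖) Filter.atTop (nhds 0) := by
    have := ((tendsto_finsetSum Finset.univ fun i _ => hGi i).const_smul ((n : ℝ)⁻¹)).norm
    simpa using this
  have hba : ∀ k, b k ≤ a k + ‖(n : ℝ)⁻¹ • ∑ i, (G i (xbar k) - G i (x k i))‖ := by
    intro k
    have : Tproj (xbar k) ((n : ℝ)⁻¹ • ∑ i, nabla i (xbar k)) =
        (n : ℝ)⁻¹ • ∑ i, Tproj (x k i) (nabla i (x k i)) +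
          (n : ℝ)⁻¹ • ∑ i, (G i (xbar k) - G i (x k i)) := by
      rw [Tproj_avg, ← smul_add, ← Finset.sum_add_distrib]
      congr 1
      refine Finset.sum_congr rfl fun i _ => ?_
      simp only [hG]
      abel
    simp only [hb, ha]
    rw [this]
    exact norm_add_le _ _
  -- boundedness of `a`
  have hMi : ∀ i, ∃ M, ∀ y ∈ Stiefel d r, ‖G i y‖ ≤ M := fun i =>
    hK.exists_bound_of_continuousOn (hGc i).continuousOn
  choose M hM using hMi
  have hab : ∀ k, a k ≤ ‖(n : ℝ)⁻¹‖ * ∑ i, M i := by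
    intro k
    simp only [ha]
    rw [norm_smul]
    gcongr
    exact (norm_sum_le _ _).trans (Finset.sum_le_sum fun i _ => hM i _ (hx k i))
  have hcob : Filter.IsCoboundedUnder (· ≥ ·) Filter.atTop a :=
    (Filter.isBoundedUnder_of ⟨_, hab⟩ : Filter.IsBoundedUnder (· ≤ ·) Filter.atTop
      a).isCoboundedUnder_ge
  have hfreq : ∀ ε > 0, ∃ᶠ k in Filter.atTop, b k < ε := by
    intro ε hε
    have h1 : ∃ᶠ k in Filter.atTop, a k < ε / 2 :=
      Filter.frequently_lt_of_liminf_lt hcob (by rw [hliminf]; linarith)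
    have h2 := hdiff0.eventually (gt_mem_nhds (half_pos hε))
    refine (h1.and_eventually h2).mono fun k hk => ?_
    have := hba k
    linarith [hk.1, hk.2]
  have hbb : Filter.IsBoundedUnder (· ≥ ·) Filter.atTop (fun k => b k ^ 2) :=
    Filter.isBoundedUnder_of ⟨0, fun k => sq_nonneg (b k)⟩
  have hfreq2 : ∀ ε > 0, ∃ᶠ k in Filter.atTop, b k ^ 2 ≤ ε := by
    intro ε hε
    refine (hfreq (Real.sqrt ε) (Real.sqrt_pos.2 hε)).mono fun k hk => ?_
    have h0 : 0 ≤ b k := norm_nonneg _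
    calc b k ^ 2 ≤ Real.sqrt ε ^ 2 := by gcongr
      _ = ε := Real.sq_sqrt hε.le
  apply le_antisymm
  · refine le_of_forall_pos_le_add fun ε hε => ?_
    rw [zero_add]
    exact Filter.liminf_le_of_frequently_le (hfreq2 ε hε) hbb
  · refine Filter.le_liminf_of_le ?_ (Filter.Eventually.of_forall fun k => sq_nonneg (b k))
    exact Filter.IsCoboundedUnder.of_frequently_le (hfreq2 1 one_pos)
end
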